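/- Let n ≥ 2 be an integer, let τ be a complex number with Im(τ) > 0, set q = e^{πiτ} and τ' = -1/τ. Then for every integer j with 1 ≤ j ≤ n-2, θ₁(jπ/n | τ'/n) = (-iτ'/n)^{-1/2} · q^{j²/n + n/4 - j} · (q^{2j}, q^{2n-2j}, q^{2n}; q^{2n})_∞, where q^{j²/n + n/4 - j} denotes e^{πiτ(j²/n + n/4 - j)} and (-iτ'/n)^{-1/2} is taken with the principal branch of the square root. -/

import Mathlib

/-!
Writing `θ₁` through the two-variable theta function `θ₂(z | τ) = ∑_{k ∈ ℤ} e^{2πikz + πik²τ}`, the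
transformation `τ ↦ -1/τ` of `θ₂` carries the left-hand side to a multiple of
`θ₂(jτ - nτ/2 + 1/2 | nτ)`, and Jacobi's triple product factors this value into the three
q-Pochhammer symbols.

The triple product is the limit of MacMahon's finite form, which is the q-binomial theorem for
`∏_{i < 2N} (1 + x w^{1-2N} w^{2i})`: the Gaussian binomial coefficients `[2N, N+k]` are uniformly
bounded and tend to `1 / (w²; w²)_∞`, so dominated convergence applies.
-/

open Complex

/-- Infinite q-Pochhammer symbol `(a; q)_∞ = ∏_{i=0}^∞ (1 - a qⁱ)`. -/
noncomputable def qPoch (a q : ℂ) : ℂ := ∏' i : ℕ, (1 - a * q ^ i)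

/-- Jacobi's first theta function
`θ₁(z | τ) = 2 ∑_{n=0}^∞ (-1)ⁿ e^{πiτ(2n+1)²/4} sin((2n+1)z)`. -/
noncomputable def theta1 (z τ : ℂ) : ℂ :=
  2 * ∑' n : ℕ, (-1 : ℂ) ^ n * Complex.exp (Real.pi * Complex.I * τ * (2 * n + 1) ^ 2 / 4) *
    Complex.sin ((2 * n + 1) * z)

open Filter Topology Finset
open scoped Real

/-- The finite q-Pochhammer symbol `(a; q)_N = ∏_{i=0}^{N-1} (1 - a qⁱ)`, whose limit as `N → ∞` is
`qPoch a q`. -/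
def qPochFin {R : Type*} [CommRing R] (a q : R) (N : ℕ) : R := ∏ i ∈ range N, (1 - a * q ^ i)

/-- The Gaussian binomial coefficient `[n, k]_q`, the coefficient in the q-binomial theorem. It is
defined by the q-Pascal recursion, so that no division by `(q; q)_k` is needed. -/
def gaussBinom {R : Type*} [CommSemiring R] (q : R) : ℕ → ℕ → R
  | _, 0 => 1
  | 0, _ + 1 => 0
  | n + 1, k + 1 => gaussBinom q n k + q ^ (k + 1) * gaussBinom q n (k + 1)

lemma qPochFin_succ {R : Type*} [CommRing R] (a q : R) (N : ℕ) :
    qPochFin a q (N + 1) = qPochFin a q N * (1 - a * q ^ N) :=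
  prod_range_succ _ _

section CommSemiring

variable {R : Type*} [CommSemiring R] (q : R)

lemma gaussBinom_zero_right (n : ℕ) : gaussBinom q n 0 = 1 := by
  cases n <;> rfl

lemma gaussBinom_succ_succ (n k : ℕ) :
    gaussBinom q (n + 1) (k + 1) = gaussBinom q n k + q ^ (k + 1) * gaussBinom q n (k + 1) := rfl

lemma gaussBinom_eq_zero_of_lt {n k : ℕ} (h : n < k) : gaussBinom q n k = 0 := by
  induction n generalizing k with
  | zero => obtain ⟨k, rfl⟩ := Nat.exists_eq_succ_of_ne_zero h.ne'; rfl
  | succ n ih =>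
    obtain ⟨k, rfl⟩ := Nat.exists_eq_succ_of_ne_zero (Nat.ne_zero_of_lt h)
    simp [gaussBinom_succ_succ, ih (show n < k by lia), ih (show n < k + 1 by lia)]

lemma gaussBinom_self (n : ℕ) : gaussBinom q n n = 1 := by
  induction n with
  | zero => rfl
  | succ n ih => simp [gaussBinom_succ_succ, ih, gaussBinom_eq_zero_of_lt q n.lt_succ_self]

theorem prod_one_add_mul_pow_eq_sum_gaussBinom (x : R) (n : ℕ) :
    ∏ i ∈ range n, (1 + x * q ^ i) =
      ∑ k ∈ range (n + 1), q ^ k.choose 2 * gaussBinom q n k * x ^ k := by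
  -- Splitting off the factor `i = 0` and using the hypothesis at `x * q` matches q-Pascal.
  induction n generalizing x with
  | zero => simp [gaussBinom_zero_right]
  | succ n ih =>
    have factors : ∏ i ∈ range n, (1 + x * q ^ (i + 1)) = ∏ i ∈ range n, (1 + x * q * q ^ i) :=
      prod_congr rfl fun i _ => by ring
    have shift : ∑ k ∈ range (n + 1), q ^ k.choose 2 * gaussBinom q n k * (x * q) ^ k =
        ∑ k ∈ range (n + 1),
          q ^ (k + 1).choose 2 * gaussBinom q n (k + 1) * (x * q) ^ (k + 1) + 1 := by
      rw [sum_range_succ', sum_range_succ _ n, gaussBinom_eq_zero_of_lt q n.lt_succ_self]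
      simp [gaussBinom_zero_right]
    rw [prod_range_succ', factors, ih, pow_zero, mul_one, mul_add, mul_one,
      sum_range_succ' _ (n + 1)]
    conv_lhs => enter [1]; rw [shift]
    rw [add_right_comm, sum_mul, ← sum_add_distrib]
    congr 1
    · refine sum_congr rfl fun k _ => ?_
      rw [gaussBinom_succ_succ, Nat.choose_succ_succ' k 1, Nat.choose_one_right]
      ring
    · simp [gaussBinom_zero_right]

end CommSemiring

lemma gaussBinom_mul_qPochFin_mul_qPochFin {R : Type*} [CommRing R] (q : R) (n k : ℕ) :
    gaussBinom q (n + k) k * (qPochFin q q k * qPochFin q q n) = qPochFin q q (n + k) := by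
  induction n generalizing k with
  | zero => simp [gaussBinom_self, qPochFin]
  | succ n ihn =>
    induction k with
    | zero => simp [gaussBinom_zero_right, qPochFin]
    | succ k ihk =>
      have hn := ihn (k + 1)
      rw [show n + 1 + k = n + (k + 1) by ring] at ihk
      rw [show n + 1 + (k + 1) = n + (k + 1) + 1 by ring, gaussBinom_succ_succ,
        qPochFin_succ q q (n + (k + 1)), ← hn]
      simp only [qPochFin_succ q q n, qPochFin_succ q q k] at hn ihk ⊢
      rw [← hn] at ihk
      linear_combination (1 - q * q ^ k) * ihk

section Field

variable {K : Type*} [Field K]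

lemma gaussBinom_add_eq_mul_inv_mul_inv {q : K} {n k : ℕ} (hn : qPochFin q q n ≠ 0)
    (hk : qPochFin q q k ≠ 0) :
    gaussBinom q (n + k) k = qPochFin q q (n + k) * (qPochFin q q k)⁻¹ * (qPochFin q q n)⁻¹ := by
  rw [← gaussBinom_mul_qPochFin_mul_qPochFin]
  field_simp

lemma prod_one_add_mul_zpow_mul_sq_pow_eq_qPochFin {x w : K} (hx : x ≠ 0) (hw : w ≠ 0) (N : ℕ) :
    ∏ i ∈ range (2 * N), (1 + x * w ^ (1 - 2 * N : ℤ) * (w ^ 2) ^ i) =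
      x ^ N * (w ^ N ^ 2)⁻¹ *
        (qPochFin (-(x * w)) (w ^ 2) N * qPochFin (-(w / x)) (w ^ 2) N) := by
  induction N with
  | zero => simp [qPochFin]
  | succ N ih =>
    have middle (i : ℕ) : w ^ (1 - 2 * (N + 1 : ℕ) : ℤ) * (w ^ 2) ^ (i + 1) =
        w ^ (1 - 2 * N : ℤ) * (w ^ 2) ^ i := by
      simp only [← zpow_natCast, ← zpow_mul, ← zpow_add₀ hw]
      congr 1
      push_cast
      ring
    have first : w ^ (1 - 2 * (N + 1 : ℕ) : ℤ) = (w * (w ^ 2) ^ N)⁻¹ := by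
      rw [← zpow_natCast, ← zpow_natCast, ← zpow_mul, ← zpow_one_add₀ hw, ← zpow_neg]
      congr 1
      push_cast
      ring
    have last : w ^ (1 - 2 * N : ℤ) * (w ^ 2) ^ (2 * N) = w * (w ^ 2) ^ N := by
      simp only [← zpow_natCast, ← zpow_mul, ← zpow_add₀ hw, ← zpow_one_add₀ hw]
      congr 1
      push_cast
      ring
    rw [mul_add_one, prod_range_succ', prod_range_succ]
    simp only [mul_assoc x, middle, last] at ih ⊢
    rw [ih, first, qPochFin_succ, qPochFin_succ]
    field_simp
    ring

/-- MacMahon's finite form of Jacobi's triple product. -/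
theorem qPochFin_mul_qPochFin_eq_sum_gaussBinom {x w : K} (hx : x ≠ 0) (hw : w ≠ 0) (N : ℕ) :
    qPochFin (-(x * w)) (w ^ 2) N * qPochFin (-(w / x)) (w ^ 2) N =
      ∑ k ∈ Icc (-N : ℤ) N, x ^ k * w ^ k ^ 2 * gaussBinom (w ^ 2) (2 * N) (k + N).toNat := by
  have hfactor : x ^ N * (w ^ N ^ 2)⁻¹ ≠ 0 := by positivity
  refine mul_left_cancel₀ hfactor ?_
  rw [← prod_one_add_mul_zpow_mul_sq_pow_eq_qPochFin hx hw,
    prod_one_add_mul_pow_eq_sum_gaussBinom, mul_sum]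
  refine sum_nbij' (fun m => (m : ℤ) - N) (fun k => (k + N).toNat) ?_ ?_ ?_ ?_ fun m _ => ?_
  · intro m hm
    rw [mem_range] at hm
    rw [mem_Icc]
    lia
  · intro k hk
    rw [mem_Icc] at hk
    rw [mem_range]
    lia
  · intro m _
    rw [sub_add_cancel, Int.toNat_natCast]
  · intro k hk
    rw [mem_Icc] at hk
    lia
  · have hchoose : (m.choose 2 : ℤ) * 2 = m * (m - 1) := by
      have hcast := Nat.cast_choose_two ℚ m
      field_simp at hcast
      exact_mod_cast hcast
    have hw_pow : (w ^ N ^ 2)⁻¹ * w ^ ((m : ℤ) - N) ^ 2 =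
        (w ^ 2) ^ m.choose 2 * (w ^ (1 - 2 * N : ℤ)) ^ m := by
      simp only [← zpow_natCast, ← zpow_mul, ← zpow_neg, ← zpow_add₀ hw]
      congr 1
      push_cast
      linear_combination -hchoose
    have hx_pow : x ^ N * x ^ ((m : ℤ) - N) = x ^ m := by
      rw [← zpow_natCast, ← zpow_natCast, ← zpow_add₀ hx, add_sub_cancel]
    rw [mul_pow, sub_add_cancel, Int.toNat_natCast, ← hx_pow]
    linear_combination -(x ^ N * x ^ ((m : ℤ) - N) * gaussBinom (w ^ 2) (2 * N) m) * hw_pow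

end Field

section NormedField

variable {𝕜 : Type*} [NormedField 𝕜] {q : 𝕜}

lemma summable_norm_neg_mul_pow (hq : ‖q‖ < 1) (a : 𝕜) :
    Summable fun i : ℕ => ‖-(a * q ^ i)‖ := by
  simpa [norm_mul, norm_pow] using
    (summable_geometric_of_lt_one (norm_nonneg q) hq).mul_left ‖a‖

lemma one_sub_mul_pow_self_ne_zero (hq : ‖q‖ < 1) (i : ℕ) : 1 - q * q ^ i ≠ 0 := by
  rw [← pow_succ', sub_ne_zero]
  refine ne_of_apply_ne norm ?_
  rw [norm_one, norm_pow]
  exact (pow_lt_one₀ (norm_nonneg q) hq i.succ_ne_zero).ne'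

lemma qPochFin_self_ne_zero (hq : ‖q‖ < 1) (N : ℕ) : qPochFin q q N ≠ 0 :=
  prod_ne_zero_iff.mpr fun i _ => one_sub_mul_pow_self_ne_zero hq i

end NormedField

section Limits

lemma tendsto_finset_sum_of_dominated_convergence {ι β G : Type*} {l : Filter ι}
    [NormedAddCommGroup G] [CompleteSpace G] {s : ι → Finset β} {f : ι → β → G} {g : β → G}
    {bound : β → ℝ} (hs : Tendsto s l atTop) (hsum : Summable bound)
    (hlim : ∀ k, Tendsto (f · k) l (𝓝 (g k))) (hbound : ∀ i k, ‖f i k‖ ≤ bound k) :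
    Tendsto (fun i => ∑ k ∈ s i, f i k) l (𝓝 (∑' k, g k)) := by
  simp only [fun i => sum_eq_tsum_indicator (f i) (s i)]
  refine tendsto_tsum_of_dominated_convergence hsum (fun k => (hlim k).congr' ?_)
    (Eventually.of_forall fun i k => (norm_indicator_le_norm_self _ _).trans (hbound i k))
  filter_upwards [hs.eventually_ge_atTop {k}] with i hi
  exact (Set.indicator_of_mem (by simpa using hi) _).symm

variable {q : ℂ}

lemma tendsto_qPochFin (hq : ‖q‖ < 1) (a : ℂ) :
    Tendsto (qPochFin a q) atTop (𝓝 (qPoch a q)) := by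
  simpa only [← sub_eq_add_neg] using!
    (multipliable_one_add_of_summable (summable_norm_neg_mul_pow hq a)).tendsto_prod_tprod_nat

lemma qPoch_self_ne_zero (hq : ‖q‖ < 1) : qPoch q q ≠ 0 := by
  simpa only [← sub_eq_add_neg] using!
    tprod_one_add_ne_zero_of_summable (f := fun i : ℕ => -(q * q ^ i))
      (fun i => by simpa only [← sub_eq_add_neg] using one_sub_mul_pow_self_ne_zero hq i)
      (summable_norm_neg_mul_pow hq q)

lemma exists_norm_gaussBinom_le (hq : ‖q‖ < 1) : ∃ C : ℝ, ∀ n k, ‖gaussBinom q n k‖ ≤ C := by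
  have hlim := tendsto_qPochFin hq q
  obtain ⟨A, hA⟩ := hlim.norm.bddAbove_range
  obtain ⟨B, hB⟩ := (hlim.inv₀ (qPoch_self_ne_zero hq)).norm.bddAbove_range
  replace hA n : ‖qPochFin q q n‖ ≤ A := hA ⟨n, rfl⟩
  replace hB n : ‖(qPochFin q q n)⁻¹‖ ≤ B := hB ⟨n, rfl⟩
  have hA0 : 0 ≤ A := (norm_nonneg _).trans (hA 0)
  have hB0 : 0 ≤ B := (norm_nonneg _).trans (hB 0)
  refine ⟨A * B * B, fun n k => ?_⟩
  obtain hnk | hkn := lt_or_ge n k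
  · rw [gaussBinom_eq_zero_of_lt q hnk, norm_zero]
    positivity
  · obtain ⟨m, rfl⟩ := Nat.exists_eq_add_of_le' hkn
    rw [gaussBinom_add_eq_mul_inv_mul_inv (qPochFin_self_ne_zero hq m)
      (qPochFin_self_ne_zero hq k), norm_mul, norm_mul]
    gcongr
    exacts [hA _, hB _, hB _]

lemma tendsto_gaussBinom_add (hq : ‖q‖ < 1) {ι : Type*} {l : Filter ι} {n k : ι → ℕ}
    (hn : Tendsto n l atTop) (hk : Tendsto k l atTop) :
    Tendsto (fun i => gaussBinom q (n i + k i) (k i)) l (𝓝 (qPoch q q)⁻¹) := by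
  have hlim := tendsto_qPochFin hq q
  have h0 := qPoch_self_ne_zero hq
  have hquot := ((hlim.comp (hn.atTop_add_atTop hk)).mul ((hlim.comp hk).inv₀ h0)).mul
    ((hlim.comp hn).inv₀ h0)
  rw [mul_inv_cancel₀ h0, one_mul] at hquot
  exact hquot.congr fun i => (gaussBinom_add_eq_mul_inv_mul_inv (qPochFin_self_ne_zero hq _)
    (qPochFin_self_ne_zero hq _)).symm

lemma tendsto_gaussBinom_two_mul (hq : ‖q‖ < 1) (k : ℤ) :
    Tendsto (fun N : ℕ => gaussBinom q (2 * N) (k + N).toNat) atTop (𝓝 (qPoch q q)⁻¹) := by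
  have htoNat (m : ℤ) : Tendsto (fun N : ℕ => (m + N).toNat) atTop atTop :=
    tendsto_atTop.mpr fun b => by
      filter_upwards [eventually_ge_atTop (b + m.natAbs)] with N hN
      lia
  refine (tendsto_gaussBinom_add hq (htoNat (-k)) (htoNat k)).congr' ?_
  filter_upwards [eventually_ge_atTop k.natAbs] with N hN
  congr 1
  lia

end Limits

section Theta

lemma jacobiTheta₂_term_eq_zpow_mul_zpow (k : ℤ) (z τ : ℂ) :
    jacobiTheta₂_term k z τ = cexp (2 * π * I * z) ^ k * cexp (π * I * τ) ^ k ^ 2 := by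
  rw [jacobiTheta₂_term, ← Complex.exp_int_mul, ← Complex.exp_int_mul, ← Complex.exp_add]
  congr 1
  push_cast
  ring

/-- Jacobi's triple product: with `x = e^{2πiz}` and `w = e^{πiτ}` it reads
`∑_{k ∈ ℤ} x^k w^{k²} = (-xw, -w/x, w²; w²)_∞`. -/
theorem jacobiTheta₂_eq_qPoch_mul_qPoch_mul_qPoch (z : ℂ) {τ : ℂ} (hτ : 0 < τ.im) :
    jacobiTheta₂ z τ =
      qPoch (-cexp (π * I * (τ + 2 * z))) (cexp (2 * π * I * τ)) *
        qPoch (-cexp (π * I * (τ - 2 * z))) (cexp (2 * π * I * τ)) *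
        qPoch (cexp (2 * π * I * τ)) (cexp (2 * π * I * τ)) := by
  set x := cexp (2 * π * I * z) with hx
  set w := cexp (π * I * τ) with hw
  have hq : cexp (2 * π * I * τ) = w ^ 2 := by rw [hw, ← Complex.exp_nat_mul]; push_cast; ring_nf
  have hxw : cexp (π * I * (τ + 2 * z)) = x * w := by rw [hx, hw, ← Complex.exp_add]; ring_nf
  have hwx : cexp (π * I * (τ - 2 * z)) = w / x := by rw [hx, hw, ← Complex.exp_sub]; ring_nf
  have hx0 : x ≠ 0 := Complex.exp_ne_zero _
  have hw0 : w ≠ 0 := Complex.exp_ne_zero _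
  have hw1 : ‖w ^ 2‖ < 1 := by
    rw [← hq]
    exact UpperHalfPlane.norm_exp_two_pi_I_lt_one ⟨τ, hτ⟩
  obtain ⟨C, hC⟩ := exists_norm_gaussBinom_le hw1
  have hsum := ((summable_jacobiTheta₂_term_iff z τ).mpr hτ).norm.mul_right C
  simp only [jacobiTheta₂_term_eq_zpow_mul_zpow, ← hx, ← hw] at hsum
  have hlim := tendsto_finset_sum_of_dominated_convergence (tendsto_Icc_neg (R := ℤ)) hsum
    (fun k => (tendsto_gaussBinom_two_mul hw1 k).const_mul (x ^ k * w ^ k ^ 2))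
    fun N k => (norm_mul_le _ _).trans (by gcongr; exact hC _ _)
  simp only [← qPochFin_mul_qPochFin_eq_sum_gaussBinom hx0 hw0, tsum_mul_right] at hlim
  have hprod := tendsto_nhds_unique hlim ((tendsto_qPochFin hw1 _).mul (tendsto_qPochFin hw1 _))
  rw [hq, hxw, hwx, ← hprod, inv_mul_cancel_right₀ (qPoch_self_ne_zero hw1), jacobiTheta₂]
  simp only [jacobiTheta₂_term_eq_zpow_mul_zpow, hx, hw]

/-- The terms of `θ₂` at `k = n` and `k = -(n + 1)` are the two exponentials of the sine in the
`n`-th term of `θ₁`. -/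
lemma jacobiTheta₂_term_add_jacobiTheta₂_term_neg_add_one (n : ℕ) (z τ : ℂ) :
    I * cexp (π * I * τ / 4 - I * z) *
        (jacobiTheta₂_term n (-z / π + τ / 2 + 1 / 2) τ +
          jacobiTheta₂_term (-(n + 1)) (-z / π + τ / 2 + 1 / 2) τ) =
      2 * ((-1) ^ n * cexp (π * I * τ * (2 * n + 1) ^ 2 / 4) * Complex.sin ((2 * n + 1) * z)) := by
  have hpi : (π : ℂ) ≠ 0 := Complex.ofReal_ne_zero.mpr Real.pi_ne_zero
  have hneg : (-1 : ℂ) ^ n = cexp (π * I * n) := by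
    rw [← Complex.exp_pi_mul_I, ← Complex.exp_nat_mul, mul_comm]
  have hneg' : (-1 : ℂ) ^ n = cexp (-(π * I * n)) := by
    rw [Complex.exp_neg, ← hneg, ← inv_pow, inv_neg_one]
  have hpos_term : cexp (π * I * τ / 4 - I * z) *
      jacobiTheta₂_term n (-z / π + τ / 2 + 1 / 2) τ =
        (-1) ^ n * cexp (π * I * τ * (2 * n + 1) ^ 2 / 4) * cexp (-((2 * n + 1) * z) * I) := by
    rw [hneg, jacobiTheta₂_term]
    simp only [← Complex.exp_add]
    congr 1
    push_cast
    field_simp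
    ring
  have hneg_term : cexp (π * I * τ / 4 - I * z) *
      jacobiTheta₂_term (-(n + 1)) (-z / π + τ / 2 + 1 / 2) τ =
        -((-1) ^ n * cexp (π * I * τ * (2 * n + 1) ^ 2 / 4) * cexp ((2 * n + 1) * z * I)) := by
    rw [hneg', jacobiTheta₂_term]
    simp only [← Complex.exp_add]
    rw [← Complex.exp_sub_pi_mul_I]
    congr 1
    push_cast
    field_simp
    ring
  rw [mul_assoc I, mul_add, hpos_term, hneg_term, Complex.sin]
  ring

lemma theta1_eq_jacobiTheta₂ (z : ℂ) {τ : ℂ} (hτ : 0 < τ.im) :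
    theta1 z τ = I * cexp (π * I * τ / 4 - I * z) *
      jacobiTheta₂ (-z / π + τ / 2 + 1 / 2) τ := by
  have hsum := (summable_jacobiTheta₂_term_iff (-z / π + τ / 2 + 1 / 2) τ).mpr hτ
  rw [jacobiTheta₂, ← tsum_nat_add_neg_add_one hsum, theta1, ← tsum_mul_left, ← tsum_mul_left]
  exact tsum_congr fun n =>
    (jacobiTheta₂_term_add_jacobiTheta₂_term_neg_add_one n z τ).symm

lemma im_neg_one_div_pos {τ : ℂ} (hτ : 0 < τ.im) : 0 < (-1 / τ).im := by
  simpa [neg_div, inv_neg] using UpperHalfPlane.im_inv_neg_coe_pos ⟨τ, hτ⟩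

lemma theta1_neg_one_div_eq_jacobiTheta₂ (u : ℂ) {T : ℂ} (hT : 0 < T.im) :
    theta1 (u * π / T) (-1 / T) =
      (I / T) ^ (-(1 / 2) : ℂ) * cexp (π * I * (u ^ 2 / T + T / 4 - u)) *
        jacobiTheta₂ (u - T / 2 + 1 / 2) T := by
  have hT0 : T ≠ 0 := by rintro rfl; simp at hT
  have hpi : (π : ℂ) ≠ 0 := Complex.ofReal_ne_zero.mpr Real.pi_ne_zero
  have hz : (-(u * π / T) / π + -1 / T / 2 + 1 / 2) / (-1 / T) = u - T / 2 + 1 / 2 := by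
    field_simp
    ring
  have hT_inv : -1 / (-1 / T) = T := by field_simp
  have hI : -I * (-1 / T) = I / T := by ring
  have hexp : I * cexp (π * I * (-1 / T) / 4 - I * (u * π / T)) *
      cexp (-π * I * (-(u * π / T) / π + -1 / T / 2 + 1 / 2) ^ 2 / (-1 / T)) =
      cexp (π * I * (u ^ 2 / T + T / 4 - u)) := by
    nth_rewrite 1 [← Complex.exp_pi_div_two_mul_I]
    rw [← Complex.exp_add, ← Complex.exp_add]
    congr 1
    field_simp
    ring
  rw [theta1_eq_jacobiTheta₂ _ (im_neg_one_div_pos hT), jacobiTheta₂_functional_equation, hz,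
    hT_inv, hI, Complex.cpow_neg, ← hexp]
  ring

theorem theta1_at_jpi_over_n_general (s r : ℂ) {τ : ℂ} (hτ : 0 < (r * τ).im) {τ' : ℂ}
    (hτ' : τ' = -1 / τ) :
    theta1 (s * π / r) (τ' / r) =
      (-I * τ' / r) ^ (-(1 / 2) : ℂ) * cexp (π * I * τ * (s ^ 2 / r + r / 4 - s)) *
        (qPoch (cexp (2 * s * (π * I * τ))) (cexp (2 * r * (π * I * τ))) *
          qPoch (cexp ((2 * r - 2 * s) * (π * I * τ))) (cexp (2 * r * (π * I * τ))) *
          qPoch (cexp (2 * r * (π * I * τ))) (cexp (2 * r * (π * I * τ)))) := by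
  have hr0 : r ≠ 0 := by rintro rfl; simp at hτ
  have hτ0 : τ ≠ 0 := by rintro rfl; simp at hτ
  have hτ'r : τ' / r = -1 / (r * τ) := by rw [hτ']; ring
  have hI : -I * τ' / r = I / (r * τ) := by rw [hτ']; ring
  have hz : s * π / r = s * τ * π / (r * τ) := by field_simp
  have hexp : π * I * ((s * τ) ^ 2 / (r * τ) + r * τ / 4 - s * τ) =
      π * I * τ * (s ^ 2 / r + r / 4 - s) := by field_simp
  have hs : -cexp (π * I * (r * τ + 2 * (s * τ - r * τ / 2 + 1 / 2))) =
      cexp (2 * s * (π * I * τ)) := by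
    rw [← Complex.exp_sub_pi_mul_I]
    ring_nf
  have hrs : -cexp (π * I * (r * τ - 2 * (s * τ - r * τ / 2 + 1 / 2))) =
      cexp ((2 * r - 2 * s) * (π * I * τ)) := by
    rw [← Complex.exp_add_pi_mul_I]
    ring_nf
  have hr : 2 * π * I * (r * τ) = 2 * r * (π * I * τ) := by ring
  rw [hτ'r, hI, hz, theta1_neg_one_div_eq_jacobiTheta₂ (s * τ) hτ, hexp,
    jacobiTheta₂_eq_qPoch_mul_qPoch_mul_qPoch _ hτ, hs, hrs, hr]

end Theta

theorem theta1_at_jpi_over_n (n : ℕ) (hn : 2 ≤ n) (τ : ℂ) (hτ : 0 < τ.im)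
    (q : ℂ) (hq : q = Complex.exp (Real.pi * Complex.I * τ))
    (τ' : ℂ) (hτ' : τ' = -1 / τ) (j : ℕ) (hj1 : 1 ≤ j) (hj2 : j ≤ n - 2) :
    theta1 ((j : ℂ) * Real.pi / n) (τ' / n) =
      (-Complex.I * τ' / n) ^ (-(1 / 2) : ℂ) *
        Complex.exp (Real.pi * Complex.I * τ *
          ((j : ℂ) ^ 2 / n + (n : ℂ) / 4 - (j : ℂ))) *
        (qPoch (q ^ (2 * j)) (q ^ (2 * n)) * qPoch (q ^ (2 * n - 2 * j)) (q ^ (2 * n)) *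
          qPoch (q ^ (2 * n)) (q ^ (2 * n))) := by
  have hnτ : 0 < ((n : ℂ) * τ).im := by
    simpa using mul_pos (Nat.cast_pos.mpr (by lia : 0 < n)) hτ
  have hcast : ((2 * n - 2 * j : ℕ) : ℂ) = 2 * n - 2 * j := by
    rw [Nat.cast_sub (by lia)]
    push_cast
    rfl
  simpa [hq, ← Complex.exp_nat_mul, hcast] using theta1_at_jpi_over_n_general j n hnτ hτ'
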